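/- Let N ≥ 3. Let φ : (0,∞) → [0,∞) and f : (0,∞) → (0,∞) be continuous functions such that (i) liminf_{t→0⁺} f(t) > 0, (ii) there exists r₁ > 0 such that φ is monotone (either nonincreasing or nondecreasing) on [r₁,∞), and (iii) ∫₁^∞ r·φ(r) dr = ∞. Then for every nonempty compact set K ⊂ ℝ^N there is no C² positive solution u of the inequality −Δu ≥ φ(δ_K(x)) f(u) on ℝ^N \ K. -/

import Mathlib

open Metric Set MeasureTheory Filter

noncomputable def laplacian {N : ℕ} (u : EuclideanSpace ℝ (Fin N) → ℝ)
    (x : EuclideanSpace ℝ (Fin N)) : ℝ :=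
  ∑ i, iteratedFDeriv ℝ 2 u x ![EuclideanSpace.single i 1, EuclideanSpace.single i 1]

/-!
For a nonnegative radial weight `ψ` with `∫ r ψ(r) dr = ∞`, in dimension at least `3` the radial
solution `F` of `Δ F = ψ` vanishing to first order on the sphere of radius `r₀` tends to `∞`.
Let `v = a (r₀ ^ (-1/2) - r ^ (-1/2)) - μ F`, whose first term is bounded and strictly subharmonic.
At a point where a positive supersolution `u` lies below `v` it is bounded by `a r₀ ^ (-1/2)`, so
`f(u) ≥ c > 0` there and `Δ u ≤ -c ψ < Δ v` as soon as `μ ≤ c`; hence `u - v` has no negative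
interior minimum. Since `v` vanishes on the inner sphere and is negative on large ones, `v ≤ u`
everywhere. Letting `a` be large and then `μ` small makes `v > u` at a given point, a contradiction.

Monotonicity of `φ` reduces the weight `φ(δ_K(x))` to a radial one: since `δ_K(x)` and `‖x‖` differ
by a bounded amount, `φ(δ_K(x)) ≥ φ(‖x‖ + d)` for a constant `d` and all large `‖x‖`.
-/

open Bornology
open scoped Laplacian Topology

section NormedSpace

variable {E : Type*} [NormedAddCommGroup E] [NormedSpace ℝ E]

lemma hasDerivAt_add_smul (x v : E) (s : ℝ) : HasDerivAt (fun s : ℝ ↦ x + s • v) v s := by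
  simpa using ((hasDerivAt_id s).smul_const v).const_add x

lemma tendsto_add_smul_nhds_zero (x v : E) : Tendsto (fun s : ℝ ↦ x + s • v) (𝓝 0) (𝓝 x) := by
  simpa using (hasDerivAt_add_smul x v 0).continuousAt.tendsto

lemma deriv_deriv_comp_add_smul {u : E → ℝ} {x : E} (hu : ContDiffAt ℝ 2 u x) (v : E) :
    deriv (deriv fun s : ℝ ↦ u (x + s • v)) 0 = iteratedFDeriv ℝ 2 u x ![v, v] := by
  have hderiv : deriv (fun s : ℝ ↦ u (x + s • v)) =ᶠ[𝓝 0]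
      fun s ↦ iteratedFDeriv ℝ 1 u (x + s • v) fun _ ↦ v := by
    filter_upwards [(tendsto_add_smul_nhds_zero x v).eventually (hu.eventually (by simp))] with s hs
    rw [(hs.differentiableAt two_ne_zero).deriv_comp_add_smul, iteratedFDeriv_one_apply]
  have hu₀ : ContDiffAt ℝ ((1 : ℕ) + 1) u (x + (0 : ℝ) • v) := by
    simpa [one_add_one_eq_two] using hu
  have hdiag : (fun _ : Fin 2 ↦ v) = ![v, v] := by
    ext i
    fin_cases i <;> rfl
  rw [hderiv.deriv_eq, hu₀.deriv_fderiv_add_smul, hdiag, zero_smul, add_zero]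

end NormedSpace

lemma deriv_deriv_nonneg_of_isLocalMin {p : ℝ → ℝ} {t : ℝ} (hmin : IsLocalMin p t)
    (hp : ContinuousAt p t) : 0 ≤ deriv (deriv p) t := by
  by_contra! hneg
  have hmax : IsLocalMax p t := isLocalMax_of_deriv_deriv_neg hneg hmin.deriv_eq_zero hp
  have hconst : p =ᶠ[𝓝 t] fun _ ↦ p t := by
    filter_upwards [hmin, hmax] with s hs₁ hs₂
    exact le_antisymm hs₂ hs₁
  exact hneg.ne (by simp [hconst.deriv.deriv_eq])

section InnerProductSpace

variable {E : Type*} [NormedAddCommGroup E] [InnerProductSpace ℝ E]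

lemma deriv_deriv_comp_norm_add_smul {g : ℝ → ℝ} {x : E} (hx : x ≠ 0) (hg : ContDiffAt ℝ 2 g ‖x‖)
    {v : E} (hv : ‖v‖ = 1) :
    deriv (deriv fun s : ℝ ↦ g ‖x + s • v‖) 0 =
      deriv (deriv g) ‖x‖ * (inner ℝ v x ^ 2 / ‖x‖ ^ 2) +
        deriv g ‖x‖ * (1 / ‖x‖ - inner ℝ v x ^ 2 / ‖x‖ ^ 3) := by
  have hnorm : ∀ s : ℝ, x + s • v ≠ 0 → HasDerivAt (fun s : ℝ ↦ ‖x + s • v‖)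
      ((inner ℝ v x + s) / ‖x + s • v‖) s := by
    intro s hs
    have h := (hasDerivAt_add_smul x v s).norm_sq.sqrt (by simpa using hs)
    simp only [Real.sqrt_sq (norm_nonneg _)] at h
    convert! h using 1
    rw [inner_add_left, real_inner_smul_left, real_inner_self_eq_norm_sq, hv, real_inner_comm v x]
    ring
  have hline := tendsto_add_smul_nhds_zero x v
  have hx₀ : x + (0 : ℝ) • v = x := by simp
  have hderiv : deriv (fun s : ℝ ↦ g ‖x + s • v‖) =ᶠ[𝓝 0]
      fun s ↦ deriv g ‖x + s • v‖ * ((inner ℝ v x + s) / ‖x + s • v‖) := by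
    filter_upwards [hline.eventually_ne hx,
      hline.norm.eventually (hg.eventually (by simp))] with s hs hgs
    exact ((hgs.differentiableAt two_ne_zero).hasDerivAt.comp s (hnorm s hs)).deriv
  have hnorm₀ := hnorm 0 (by rwa [hx₀])
  have hdg : HasDerivAt (deriv g) (deriv (deriv g) ‖x‖) ‖x + (0 : ℝ) • v‖ := by
    rw [hx₀]
    exact ((hg.derivWithin (m := 1) (by norm_num)).differentiableAt one_ne_zero).hasDerivAt
  have h := (hdg.comp 0 hnorm₀).mul
    ((((hasDerivAt_id (0 : ℝ)).const_add (inner ℝ v x)).div hnorm₀ (by simpa)))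
  rw [hderiv.deriv_eq]
  refine h.deriv.trans ?_
  have : ‖x‖ ≠ 0 := by simpa
  simp only [add_zero, zero_smul, id_eq, Pi.div_apply, Function.comp_apply, one_mul, one_div]
  field_simp

variable [FiniteDimensional ℝ E]

lemma laplacian_nonneg_of_isLocalMin {w : E → ℝ} {x : E} (hmin : IsLocalMin w x)
    (hw : ContDiffAt ℝ 2 w x) : 0 ≤ Δ w x := by
  rw [InnerProductSpace.laplacian_eq_iteratedFDeriv_stdOrthonormalBasis]
  refine Finset.sum_nonneg fun i _ ↦ ?_
  rw [← deriv_deriv_comp_add_smul hw]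
  set v := stdOrthonormalBasis ℝ E i
  have hline := tendsto_add_smul_nhds_zero x v
  refine deriv_deriv_nonneg_of_isLocalMin ?_ ?_
  · filter_upwards [hline.eventually hmin] with s hs
    simpa using hs
  · exact ContinuousAt.comp_of_eq hw.continuousAt (hasDerivAt_add_smul x v 0).continuousAt (by simp)

lemma laplacian_comp_norm {g : ℝ → ℝ} {x : E} (hx : x ≠ 0) (hg : ContDiffAt ℝ 2 g ‖x‖) :
    Δ (fun y : E ↦ g ‖y‖) x =
      deriv (deriv g) ‖x‖ + (Module.finrank ℝ E - 1) / ‖x‖ * deriv g ‖x‖ := by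
  have hx' : ‖x‖ ≠ 0 := norm_ne_zero_iff.2 hx
  have hgx : ContDiffAt ℝ 2 (fun y : E ↦ g ‖y‖) x := hg.comp x (contDiffAt_norm ℝ hx)
  set v := stdOrthonormalBasis ℝ E
  have hsum : ∑ i, inner ℝ (v i) x ^ 2 = ‖x‖ ^ 2 := by
    simpa using v.sum_sq_norm_inner_right x
  rw [InnerProductSpace.laplacian_eq_iteratedFDeriv_stdOrthonormalBasis]
  simp only [← deriv_deriv_comp_add_smul hgx,
    deriv_deriv_comp_norm_add_smul hx hg (v.norm_eq_one _), v, Finset.sum_add_distrib,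
    ← Finset.mul_sum, Finset.sum_sub_distrib, ← Finset.sum_div]
  rw [hsum]
  simp only [Finset.sum_const, Finset.card_univ, Fintype.card_fin, nsmul_eq_mul, mul_one]
  field_simp

lemma le_of_laplacian_lt {S : Set E} (hS : IsCompact S) {u v : E → ℝ}
    (hu : ContinuousOn u S) (hv : ContinuousOn v S)
    (hu₂ : ∀ x ∈ interior S, ContDiffAt ℝ 2 u x) (hv₂ : ∀ x ∈ interior S, ContDiffAt ℝ 2 v x)
    (hfr : ∀ x ∈ frontier S, v x ≤ u x)
    (hlt : ∀ x ∈ interior S, u x < v x → Δ u x < Δ v x) : ∀ x ∈ S, v x ≤ u x := by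
  by_contra! ⟨y, hyS, hy⟩
  obtain ⟨x, hxS, hx⟩ := hS.exists_isMinOn ⟨y, hyS⟩ (hu.sub hv)
  have hneg : u x < v x := by
    have hxy : u x - v x ≤ u y - v y := hx hyS
    linarith
  have hxint : x ∈ interior S := by
    by_contra hxint
    exact (hfr x ⟨subset_closure hxS, hxint⟩).not_gt hneg
  have hmin : IsLocalMin (u - v) x := hx.isLocalMin (mem_interior_iff_mem_nhds.1 hxint)
  have hnonneg := laplacian_nonneg_of_isLocalMin hmin ((hu₂ x hxint).sub (hv₂ x hxint))
  rw [(hu₂ x hxint).laplacian_sub (hv₂ x hxint)] at hnonneg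
  linarith [hlt x hxint hneg]

end InnerProductSpace

section RadialPotential

lemma integral_pow_mul_le {h : ℝ → ℝ} {a b : ℝ} (n : ℕ) (ha : 0 ≤ a) (hab : a ≤ b)
    (hh : ContinuousOn h (Icc a b)) (hh₀ : ∀ s ∈ Icc a b, 0 ≤ h s) :
    ∫ s in a..b, s ^ n * h s ≤ b ^ n * ∫ s in a..b, h s := by
  rw [← uIcc_of_le hab] at hh
  rw [← intervalIntegral.integral_const_mul]
  refine intervalIntegral.integral_mono_on hab
    (ContinuousOn.intervalIntegrable (by fun_prop))
    (ContinuousOn.intervalIntegrable (by fun_prop)) fun s hs ↦ ?_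
  have : 0 ≤ s := ha.trans hs.1
  have := hh₀ s hs
  have := hs.2
  gcongr

/-- The solution of `F'' + (n + 2) / r * F' = ψ` with `F r₀ = F' r₀ = 0`, obtained by variation of
constants: `F ‖x‖` is the radial function on a space of dimension `n + 3` whose Laplacian is `ψ ‖x‖`
and which vanishes to first order on the sphere of radius `r₀`. -/
noncomputable def radialPotential (n : ℕ) (ψ : ℝ → ℝ) (r₀ r : ℝ) : ℝ :=
  ((∫ s in r₀..r, s * ψ s) - (∫ s in r₀..r, s ^ (n + 1) * (s * ψ s)) / r ^ (n + 1)) / (n + 1)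

variable {n : ℕ} {ψ : ℝ → ℝ} {r₀ r : ℝ}

@[simp]
lemma radialPotential_self : radialPotential n ψ r₀ r₀ = 0 := by
  simp [radialPotential]

lemma hasDerivAt_integral_pow_mul (hψ : Continuous ψ) (m : ℕ) :
    HasDerivAt (fun r ↦ ∫ s in r₀..r, s ^ m * (s * ψ s)) (r ^ m * (r * ψ r)) r :=
  (Continuous.integral_hasStrictDerivAt (by fun_prop) r₀ r).hasDerivAt

lemma hasDerivAt_radialPotential (hψ : Continuous ψ) (hr : r ≠ 0) :
    HasDerivAt (radialPotential n ψ r₀)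
      ((∫ s in r₀..r, s ^ (n + 1) * (s * ψ s)) / r ^ (n + 2)) r := by
  have hH : HasDerivAt (fun r ↦ ∫ s in r₀..r, s * ψ s) (r * ψ r) r :=
    (Continuous.integral_hasStrictDerivAt (by fun_prop) r₀ r).hasDerivAt
  have hG := (hasDerivAt_integral_pow_mul (r₀ := r₀) hψ (n + 1)).div (hasDerivAt_pow (n + 1) r)
    (by positivity)
  refine ((hH.sub hG).div_const _).congr_deriv ?_
  have : (n : ℝ) + 1 ≠ 0 := by positivity
  push_cast
  field_simp
  ring

lemma hasDerivAt_deriv_radialPotential (hψ : Continuous ψ) (hr : r ≠ 0) :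
    HasDerivAt (deriv (radialPotential n ψ r₀))
      (ψ r - (n + 2) / r * deriv (radialPotential n ψ r₀) r) r := by
  have hderiv : deriv (radialPotential n ψ r₀) =ᶠ[𝓝 r]
      fun r ↦ (∫ s in r₀..r, s ^ (n + 1) * (s * ψ s)) / r ^ (n + 2) := by
    filter_upwards [eventually_ne_nhds hr] with t ht
    exact (hasDerivAt_radialPotential hψ ht).deriv
  rw [hderiv.hasDerivAt_iff, hderiv.self_of_nhds]
  refine ((hasDerivAt_integral_pow_mul hψ (n + 1)).div (hasDerivAt_pow (n + 2) r)
    (by positivity)).congr_deriv ?_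
  push_cast
  field_simp
  ring

lemma contDiffAt_radialPotential (hψ : Continuous ψ) (hr : r ≠ 0) :
    ContDiffAt ℝ 2 (radialPotential n ψ r₀) r := by
  suffices ContDiffOn ℝ (1 + 1) (radialPotential n ψ r₀) {0}ᶜ by
    rw [one_add_one_eq_two] at this
    exact this.contDiffAt (isOpen_compl_singleton.mem_nhds hr)
  refine (contDiffOn_succ_iff_deriv_of_isOpen isOpen_compl_singleton).2
    ⟨fun t ht ↦ (hasDerivAt_radialPotential hψ ht).differentiableAt.differentiableWithinAt,
      by simp, ?_⟩
  have hG : ContDiff ℝ 1 fun r ↦ ∫ s in r₀..r, s ^ (n + 1) * (s * ψ s) := by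
    rw [contDiff_one_iff_deriv]
    have hderiv := fun r ↦ hasDerivAt_integral_pow_mul (r₀ := r₀) (r := r) hψ (n + 1)
    refine ⟨fun r ↦ (hderiv r).differentiableAt, ?_⟩
    rw [funext fun r ↦ (hderiv r).deriv]
    fun_prop
  refine ContDiffOn.congr (hG.contDiffOn.div (contDiff_id.pow (n + 2)).contDiffOn fun t ht ↦ ?_)
    fun t ht ↦ (hasDerivAt_radialPotential hψ ht).deriv
  exact pow_ne_zero _ ht

lemma radialPotential_nonneg (hψ : Continuous ψ) (hψ₀ : ∀ s, r₀ ≤ s → 0 ≤ ψ s) (hr₀ : 0 < r₀)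
    (hr : r₀ ≤ r) : 0 ≤ radialPotential n ψ r₀ r := by
  have hrpos : 0 < r := hr₀.trans_le hr
  have hle := integral_pow_mul_le (h := fun s ↦ s * ψ s) (n + 1) hr₀.le hr (by fun_prop)
    fun s hs ↦ mul_nonneg (hr₀.le.trans hs.1) (hψ₀ s hs.1)
  refine div_nonneg (sub_nonneg.2 ?_) (by positivity)
  rwa [div_le_iff₀' (by positivity)]

/- On `[r₀, r / 2]` the weight `(s / r) ^ (n + 1)` is at most `1 / 2`, on `[r / 2, r]` at most
`1`. -/
lemma integral_half_le_radialPotential (hψ : Continuous ψ) (hψ₀ : ∀ s, r₀ ≤ s → 0 ≤ ψ s)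
    (hr₀ : 0 < r₀) (hr : 2 * r₀ ≤ r) :
    (∫ s in r₀..r / 2, s * ψ s) / (2 * (n + 1)) ≤ radialPotential n ψ r₀ r := by
  have hrpos : 0 < r := by linarith
  set h : ℝ → ℝ := fun s ↦ s * ψ s
  have hh₀ : ∀ s, r₀ ≤ s → 0 ≤ h s := fun s hs ↦ mul_nonneg (hr₀.le.trans hs) (hψ₀ s hs)
  have hcont : Continuous h := by fun_prop
  have hint : ∀ a b, IntervalIntegrable h volume a b := hcont.intervalIntegrable
  have hint' : ∀ a b, IntervalIntegrable (fun s ↦ s ^ (n + 1) * h s) volume a b :=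
    Continuous.intervalIntegrable (by fun_prop)
  have hinner := integral_pow_mul_le (n + 1) hr₀.le (by linarith : r₀ ≤ r / 2)
    hcont.continuousOn fun s hs ↦ hh₀ s hs.1
  have houter := integral_pow_mul_le (n + 1) (by linarith : 0 ≤ r / 2) (by linarith : r / 2 ≤ r)
    hcont.continuousOn fun s hs ↦ hh₀ s (by linarith [hs.1])
  have hinner₀ : 0 ≤ ∫ s in r₀..r / 2, h s :=
    intervalIntegral.integral_nonneg (by linarith) fun s hs ↦ hh₀ s hs.1
  have hhalf : (r / 2) ^ (n + 1) ≤ r ^ (n + 1) / 2 := by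
    rw [div_pow]
    gcongr
    exact le_self_pow₀ one_le_two n.succ_ne_zero
  have hmoment : (∫ s in r₀..r, s ^ (n + 1) * h s) / r ^ (n + 1) ≤
      (∫ s in r₀..r, h s) - (∫ s in r₀..r / 2, h s) / 2 := by
    rw [div_le_iff₀' (by positivity),
      ← intervalIntegral.integral_add_adjacent_intervals (hint' r₀ (r / 2)) (hint' (r / 2) r),
      ← intervalIntegral.integral_add_adjacent_intervals (hint r₀ (r / 2)) (hint (r / 2) r)]
    linarith [mul_le_mul_of_nonneg_right hhalf hinner₀]
  rw [radialPotential, ← div_div]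
  gcongr
  linarith

lemma tendsto_radialPotential_atTop (hψ : Continuous ψ) (hψ₀ : ∀ s, r₀ ≤ s → 0 ≤ ψ s)
    (hr₀ : 0 < r₀) (hdiv : Tendsto (fun r ↦ ∫ s in r₀..r, s * ψ s) atTop atTop) :
    Tendsto (radialPotential n ψ r₀) atTop atTop := by
  have hhalf : Tendsto (fun r : ℝ ↦ (∫ s in r₀..r / 2, s * ψ s) / (2 * (n + 1))) atTop atTop :=
    (hdiv.comp (tendsto_id.atTop_div_const two_pos)).atTop_div_const (by positivity)
  refine tendsto_atTop_mono' _ ?_ hhalf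
  filter_upwards [eventually_ge_atTop (2 * r₀)] with r hr
  exact integral_half_le_radialPotential hψ hψ₀ hr₀ hr

end RadialPotential

/-- The comparison function of the nonexistence argument, as a function of `r = ‖x‖` on a space of
dimension `n + 3`: a bounded rise of height `a * r₀ ^ (-1/2)` from the sphere of radius `r₀`, minus
a small multiple `μ` of the potential of `ψ`. The rise is strictly subharmonic since the exponent
`1/2` lies strictly between `0` and `n + 1`. -/
noncomputable def barrier (n : ℕ) (ψ : ℝ → ℝ) (r₀ a μ r : ℝ) : ℝ :=
  a * (r₀ ^ (-(1 / 2) : ℝ) - r ^ (-(1 / 2) : ℝ)) - μ * radialPotential n ψ r₀ r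

section Barrier

variable {n : ℕ} {ψ : ℝ → ℝ} {r₀ a μ r : ℝ}

@[simp]
lemma barrier_self : barrier n ψ r₀ a μ r₀ = 0 := by
  simp [barrier]

lemma barrier_le (hψ : Continuous ψ) (hψ₀ : ∀ s, r₀ ≤ s → 0 ≤ ψ s) (hr₀ : 0 < r₀) (ha : 0 ≤ a)
    (hμ : 0 ≤ μ) (hr : r₀ ≤ r) : barrier n ψ r₀ a μ r ≤ a * r₀ ^ (-(1 / 2) : ℝ) := by
  have hrpos : 0 < r := hr₀.trans_le hr
  have hrise : 0 ≤ a * r ^ (-(1 / 2) : ℝ) := by positivity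
  have hpot := mul_nonneg hμ (radialPotential_nonneg (n := n) hψ hψ₀ hr₀ hr)
  rw [barrier]
  linarith

lemma tendsto_barrier_atBot (hψ : Continuous ψ) (hψ₀ : ∀ s, r₀ ≤ s → 0 ≤ ψ s) (hr₀ : 0 < r₀)
    (hdiv : Tendsto (fun r ↦ ∫ s in r₀..r, s * ψ s) atTop atTop) (hμ : 0 < μ) :
    Tendsto (barrier n ψ r₀ a μ) atTop atBot := by
  have hrise : Tendsto (fun r : ℝ ↦ a * (r₀ ^ (-(1 / 2) : ℝ) - r ^ (-(1 / 2) : ℝ))) atTop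
      (𝓝 (a * (r₀ ^ (-(1 / 2) : ℝ) - 0))) :=
    ((tendsto_rpow_neg_atTop (by norm_num)).const_sub _).const_mul a
  exact (hrise.add_atBot (tendsto_neg_atTop_atBot.comp
    ((tendsto_radialPotential_atTop hψ hψ₀ hr₀ hdiv).const_mul_atTop hμ))).congr
    fun r ↦ (sub_eq_add_neg _ _).symm

lemma contDiffAt_barrier (hψ : Continuous ψ) (hr : r ≠ 0) :
    ContDiffAt ℝ 2 (barrier n ψ r₀ a μ) r :=
  (contDiffAt_const.mul (contDiffAt_const.sub (Real.contDiffAt_rpow_const_of_ne hr))).sub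
    (contDiffAt_const.mul (contDiffAt_radialPotential hψ hr))

end Barrier

section Supersolution

variable {E : Type*} [NormedAddCommGroup E] [InnerProductSpace ℝ E] [FiniteDimensional ℝ E]

lemma laplacian_norm_rpow {x : E} (hx : x ≠ 0) (p : ℝ) :
    Δ (fun y : E ↦ ‖y‖ ^ p) x = p * (p + Module.finrank ℝ E - 2) * ‖x‖ ^ (p - 2) := by
  have hx' : 0 < ‖x‖ := norm_pos_iff.2 hx
  have hp₁ : ‖x‖ ^ (p - 1) = ‖x‖ * ‖x‖ ^ (p - 2) := by
    rw [show p - 1 = 1 + (p - 2) by ring, Real.rpow_add hx', Real.rpow_one]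
  rw [laplacian_comp_norm hx (Real.contDiffAt_rpow_const_of_ne hx'.ne'), Real.deriv_rpow_const' p,
    ((Real.hasDerivAt_rpow_const (p := p - 1) (Or.inl hx'.ne')).const_mul p).deriv,
    show p - 1 - 1 = p - 2 by ring]
  simp only [hp₁]
  field_simp
  ring

lemma laplacian_radialPotential_norm {n : ℕ} (hn : Module.finrank ℝ E = n + 3) {ψ : ℝ → ℝ}
    (hψ : Continuous ψ) (r₀ : ℝ) {x : E} (hx : x ≠ 0) :
    Δ (fun y : E ↦ radialPotential n ψ r₀ ‖y‖) x = ψ ‖x‖ := by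
  have hx' : ‖x‖ ≠ 0 := norm_ne_zero_iff.2 hx
  rw [laplacian_comp_norm hx (contDiffAt_radialPotential hψ hx'),
    (hasDerivAt_deriv_radialPotential hψ hx').deriv, hn]
  push_cast
  ring

lemma lt_laplacian_barrier_norm {n : ℕ} (hn : Module.finrank ℝ E = n + 3) {ψ : ℝ → ℝ}
    (hψ : Continuous ψ) (r₀ : ℝ) {a : ℝ} (ha : 0 < a) (μ : ℝ) {x : E} (hx : x ≠ 0) :
    -(μ * ψ ‖x‖) < Δ (fun y : E ↦ barrier n ψ r₀ a μ ‖y‖) x := by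
  have hx' : 0 < ‖x‖ := norm_pos_iff.2 hx
  have hnorm := contDiffAt_norm (n := 2) ℝ hx
  set power : E → ℝ := fun y ↦ ‖y‖ ^ (-(1 / 2) : ℝ)
  set rise : E → ℝ := (fun _ ↦ r₀ ^ (-(1 / 2) : ℝ)) - power
  set potential : E → ℝ := fun y ↦ radialPotential n ψ r₀ ‖y‖
  have hpower : ContDiffAt ℝ 2 power x :=
    (Real.contDiffAt_rpow_const_of_ne hx'.ne').comp x hnorm
  have hrise : ContDiffAt ℝ 2 rise x := contDiffAt_const.sub hpower
  have hpotential : ContDiffAt ℝ 2 potential x :=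
    (contDiffAt_radialPotential hψ hx'.ne').comp x hnorm
  have hscaled : ContDiffAt ℝ 2 (a • rise) x := hrise.const_smul a
  have hdecomp : (fun y : E ↦ barrier n ψ r₀ a μ ‖y‖) = a • rise - μ • potential := rfl
  have hpos : 0 < a * ((n + 1 / 2) / 2 * ‖x‖ ^ (-(1 / 2) - 2 : ℝ)) := by positivity
  rw [hdecomp, hscaled.laplacian_sub (f₂ := μ • potential) (hpotential.const_smul μ),
    InnerProductSpace.laplacian_smul a hrise, InnerProductSpace.laplacian_smul μ hpotential,
    contDiffAt_const.laplacian_sub hpower, InnerProductSpace.laplacian_const,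
    laplacian_norm_rpow hx, laplacian_radialPotential_norm hn hψ r₀ hx, hn]
  push_cast
  simp only [smul_eq_mul, Pi.zero_apply]
  linarith

/-- `u` is a positive classical supersolution of `-Δ u = w f(u)` at the point `x`: it is positive
there, `C²` near `x`, and satisfies `-Δ u ≥ w f(u)` at `x`. -/
structure IsPosSupersolutionAt (w : E → ℝ) (f : ℝ → ℝ) (u : E → ℝ) (x : E) : Prop where
  contDiffAt : ContDiffAt ℝ 2 u x
  pos : 0 < u x
  le_neg_laplacian : w x * f (u x) ≤ -Δ u x

lemma IsPosSupersolutionAt.mono_weight {w w' : E → ℝ} {f : ℝ → ℝ} {u : E → ℝ} {x : E}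
    (h : IsPosSupersolutionAt w' f u x) (hw : w x ≤ w' x) (hf : 0 ≤ f (u x)) :
    IsPosSupersolutionAt w f u x :=
  ⟨h.contDiffAt, h.pos, (mul_le_mul_of_nonneg_right hw hf).trans h.le_neg_laplacian⟩

lemma barrier_le_of_isPosSupersolutionAt {n : ℕ} (hn : Module.finrank ℝ E = n + 3) {ψ f : ℝ → ℝ}
    {r₀ R a μ c : ℝ} (hψ : Continuous ψ) (hψ₀ : ∀ s, r₀ ≤ s → 0 ≤ ψ s) (hr₀ : 0 < r₀)
    (ha : 0 < a) (hμ : 0 ≤ μ) (hμc : μ ≤ c) (hR : barrier n ψ r₀ a μ R ≤ 0)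
    (hf : ∀ t ∈ Ioc 0 (a * r₀ ^ (-(1 / 2) : ℝ)), c ≤ f t) {u : E → ℝ}
    (hu : ∀ x, r₀ ≤ ‖x‖ → IsPosSupersolutionAt (fun y ↦ ψ ‖y‖) f u x) {x : E}
    (hx : ‖x‖ ∈ Icc r₀ R) : barrier n ψ r₀ a μ ‖x‖ ≤ u x := by
  have hcompact : IsCompact (norm ⁻¹' Icc r₀ R : Set E) :=
    isCompact_of_isClosed_isBounded (isClosed_Icc.preimage continuous_norm)
      (isBounded_closedBall.subset fun y hy ↦ mem_closedBall_zero_iff.2 hy.2)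
  have hne : ∀ y : E, r₀ ≤ ‖y‖ → y ≠ 0 := fun y hy ↦ norm_pos_iff.1 (hr₀.trans_le hy)
  have hbarrier : ∀ y : E, r₀ ≤ ‖y‖ →
      ContDiffAt ℝ 2 (fun y : E ↦ barrier n ψ r₀ a μ ‖y‖) y := fun y hy ↦
    (contDiffAt_barrier hψ (norm_ne_zero_iff.2 (hne y hy))).comp y (contDiffAt_norm ℝ (hne y hy))
  refine le_of_laplacian_lt (v := fun y ↦ barrier n ψ r₀ a μ ‖y‖) hcompact
    (fun y hy ↦ (hu y hy.1).contDiffAt.continuousAt.continuousWithinAt)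
    (fun y hy ↦ (hbarrier y hy.1).continuousAt.continuousWithinAt)
    (fun y hy ↦ (hu y (interior_subset hy).1).contDiffAt)
    (fun y hy ↦ hbarrier y (interior_subset hy).1) (fun y hy ↦ ?_) (fun y hy hlt ↦ ?_) x hx
  · have hbdry := continuous_norm.frontier_preimage_subset _ hy
    rw [frontier_Icc (hx.1.trans hx.2)] at hbdry
    have hy₁ : r₀ ≤ ‖y‖ := (hcompact.isClosed.frontier_subset hy).1
    refine le_trans ?_ (hu y hy₁).pos.le
    rcases hbdry with hy₂ | hy₂
    · exact (congrArg (barrier n ψ r₀ a μ) hy₂).trans_le barrier_self.le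
    · exact (congrArg (barrier n ψ r₀ a μ) hy₂).trans_le hR
  · have hy₁ : r₀ ≤ ‖y‖ := (interior_subset hy).1
    have hfy : c ≤ f (u y) :=
      hf _ ⟨(hu y hy₁).pos, hlt.le.trans (barrier_le hψ hψ₀ hr₀ ha.le hμ hy₁)⟩
    have hsource : ψ ‖y‖ * μ ≤ ψ ‖y‖ * f (u y) :=
      mul_le_mul_of_nonneg_left (hμc.trans hfy) (hψ₀ _ hy₁)
    linarith [(hu y hy₁).le_neg_laplacian,
      lt_laplacian_barrier_norm hn hψ r₀ ha μ (hne y hy₁)]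

theorem not_forall_isPosSupersolutionAt_norm {n : ℕ} (hn : Module.finrank ℝ E = n + 3)
    {ψ f : ℝ → ℝ} {r₀ : ℝ} (hψ : Continuous ψ) (hψ₀ : ∀ s, r₀ ≤ s → 0 ≤ ψ s) (hr₀ : 0 < r₀)
    (hdiv : Tendsto (fun r ↦ ∫ s in r₀..r, s * ψ s) atTop atTop)
    (hf : ∀ M, ∃ c > 0, ∀ t ∈ Ioc 0 M, c ≤ f t) (u : E → ℝ) :
    ¬ ∀ x, r₀ ≤ ‖x‖ → IsPosSupersolutionAt (fun y ↦ ψ ‖y‖) f u x := by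
  intro hu
  have : Nontrivial E := Module.nontrivial_of_finrank_pos (R := ℝ) (by omega)
  obtain ⟨x₁, hx₁⟩ := exists_norm_eq E (by positivity : 0 ≤ 2 * r₀)
  set b : ℝ := r₀ ^ (-(1 / 2) : ℝ) - (2 * r₀) ^ (-(1 / 2) : ℝ)
  have hb : 0 < b := sub_pos.2 (Real.rpow_lt_rpow_of_neg hr₀ (by linarith) (by norm_num))
  have hux₁ : 0 < u x₁ := (hu x₁ (by linarith)).pos
  set a : ℝ := (u x₁ + 1) / b
  have ha : 0 < a := by positivity
  obtain ⟨c, hc, hfc⟩ := hf (a * r₀ ^ (-(1 / 2) : ℝ))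
  obtain ⟨ν, hν, hν₁⟩ := exists_pos_mul_lt one_pos (radialPotential n ψ r₀ (2 * r₀))
  have hF : 0 ≤ radialPotential n ψ r₀ (2 * r₀) :=
    radialPotential_nonneg hψ hψ₀ hr₀ (by linarith)
  obtain ⟨R, hR, hR₁⟩ := ((tendsto_barrier_atBot (n := n) (a := a) hψ hψ₀ hr₀ hdiv
    (lt_min hc hν)).eventually_le_atBot 0 |>.and (eventually_ge_atTop (2 * r₀))).exists
  have hle := barrier_le_of_isPosSupersolutionAt hn hψ hψ₀ hr₀ ha (lt_min hc hν).le
    (min_le_left c ν) hR hfc hu (x := x₁) ⟨by linarith, by linarith⟩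
  have hab : a * b = u x₁ + 1 := div_mul_cancel₀ _ hb.ne'
  have hsmall := mul_le_mul_of_nonneg_right (min_le_right c ν) hF
  rw [hx₁, barrier, hab] at hle
  linarith

end Supersolution

section Weight

lemma tendsto_integral_atTop_of_not_integrableOn {h : ℝ → ℝ} {a : ℝ} (hh : ContinuousOn h (Ici a))
    (hh₀ : ∀ s, a ≤ s → 0 ≤ h s) (hint : ¬ IntegrableOn h (Ioi a)) :
    Tendsto (fun r ↦ ∫ s in a..r, h s) atTop atTop := by
  have hIcc : ∀ r, IntegrableOn h (Icc a r) := fun r ↦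
    (hh.mono Icc_subset_Ici_self).integrableOn_Icc
  refine tendsto_atTop.2 fun B ↦ ?_
  by_contra hB
  refine hint (integrableOn_Ioi_of_intervalIntegral_norm_bounded (l := atTop) (b := id) B a
    (fun r ↦ (hIcc r).mono_set Ioc_subset_Icc_self) tendsto_id ?_)
  filter_upwards [eventually_ge_atTop a] with r hr
  obtain ⟨R, hrR, hR⟩ := (not_eventually.1 hB).forall_exists_of_atTop r
  calc ∫ s in a..r, ‖h s‖ = ∫ s in a..r, h s := by
        refine intervalIntegral.integral_congr fun s hs ↦ ?_
        rw [uIcc_of_le hr] at hs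
        exact Real.norm_of_nonneg (hh₀ s hs.1)
    _ ≤ ∫ s in a..R, h s := by
        refine intervalIntegral.integral_mono_interval le_rfl hr hrR ?_ ?_
        · filter_upwards [ae_restrict_mem measurableSet_Ioc] with s hs
          exact hh₀ s hs.1.le
        · rw [intervalIntegrable_iff_integrableOn_Icc_of_le (hr.trans hrR)]
          exact hIcc R
    _ ≤ B := (not_le.1 hR).le

lemma integrableOn_Ioi_of_continuousOn {h : ℝ → ℝ} {a b c : ℝ} (hh : ContinuousOn h (Ioi c))
    (hb : c < b) (hint : IntegrableOn h (Ioi a)) : IntegrableOn h (Ioi b) := by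
  have hcompact : IntegrableOn h (Icc b a) :=
    (hh.mono fun s hs ↦ hb.trans_le hs.1).integrableOn_Icc
  refine (hcompact.union hint).mono_set fun s hs ↦ ?_
  exact (le_or_gt s a).imp (fun hsa ↦ ⟨(mem_Ioi.1 hs).le, hsa⟩) id

/- For `|d| < a < s`, the factor `s` dominates `(s + d) / 2`. -/
lemma integrableOn_mul_of_integrableOn_mul_comp_add {φ : ℝ → ℝ} (hφ : ContinuousOn φ (Ioi 0))
    {a d : ℝ} (hd : |d| < a) (hint : IntegrableOn (fun s ↦ s * φ (s + d)) (Ioi a)) :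
    IntegrableOn (fun r ↦ r * φ r) (Ioi (a + d)) := by
  obtain ⟨hd₁, hd₂⟩ := abs_lt.1 hd
  have hshift : IntegrableOn (fun s ↦ (s + d) * φ (s + d)) (Ioi a) := by
    have hmaps : MapsTo (fun s ↦ s + d) (Ioi a) (Ioi 0) := fun s hs ↦ by
      have := mem_Ioi.1 hs
      exact mem_Ioi.2 (by linarith)
    refine (hint.norm.const_mul 2).mono' ?_ ?_
    · refine ContinuousOn.aestronglyMeasurable ?_ measurableSet_Ioi
      exact (by fun_prop : ContinuousOn (fun s ↦ s + d) (Ioi a)).mul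
        (hφ.comp (by fun_prop) hmaps)
    · filter_upwards [ae_restrict_mem measurableSet_Ioi] with s hs
      have has := mem_Ioi.1 hs
      rw [norm_mul, norm_mul, ← mul_assoc, Real.norm_of_nonneg (mem_Ioi.1 (hmaps hs)).le,
        Real.norm_of_nonneg (by linarith : 0 ≤ s)]
      gcongr
      linarith
  rw [← (measurePreserving_add_right volume d).integrableOn_comp_preimage
    (measurableEmbedding_addRight d), preimage_add_const_Ioi, add_sub_cancel_right]
  exact hshift

lemma tendsto_integral_mul_comp_max_add_atTop {φ : ℝ → ℝ} (hφ : ContinuousOn φ (Ioi 0))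
    (hφ₀ : ∀ r, 0 < r → 0 ≤ φ r) (hdiv : ¬ IntegrableOn (fun r ↦ r * φ r) (Ioi 1))
    {r₀ d : ℝ} (hd : |d| < r₀) :
    Tendsto (fun r ↦ ∫ s in r₀..r, s * φ (max s r₀ + d)) atTop atTop := by
  obtain ⟨hd₁, hd₂⟩ := abs_lt.1 hd
  have hpos : ∀ s, 0 < max s r₀ + d := fun s ↦ by linarith [le_max_right s r₀]
  have hψ : Continuous fun s ↦ φ (max s r₀ + d) := hφ.comp_continuous (by fun_prop) hpos
  refine tendsto_integral_atTop_of_not_integrableOn (continuous_id.mul hψ).continuousOn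
    (fun s hs ↦ mul_nonneg (by linarith) (hφ₀ _ (hpos s))) fun hint ↦ hdiv ?_
  refine integrableOn_Ioi_of_continuousOn (continuousOn_id.mul hφ) one_pos
    (integrableOn_mul_of_integrableOn_mul_comp_add hφ hd (hint.congr_fun (fun s hs ↦ ?_)
      measurableSet_Ioi))
  simp only [max_eq_left (mem_Ioi.1 hs).le]

lemma exists_eventually_forall_comp_add_le {φ : ℝ → ℝ}
    (hmono : ∃ r₁, MonotoneOn φ (Ici r₁) ∨ AntitoneOn φ (Ici r₁)) (C : ℝ) :
    ∃ d, ∀ᶠ r in atTop, ∀ t, |t - r| ≤ C → φ (r + d) ≤ φ t := by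
  obtain ⟨r₁, hmono | hanti⟩ := hmono
  · refine ⟨-C, ?_⟩
    filter_upwards [eventually_ge_atTop (r₁ + C)] with r hr t ht
    have ht₁ := (abs_le.1 ht).1
    exact hmono (mem_Ici.2 (by linarith)) (mem_Ici.2 (by linarith)) (by linarith)
  · refine ⟨C, ?_⟩
    filter_upwards [eventually_ge_atTop (r₁ + C)] with r hr t ht
    obtain ⟨ht₁, ht₂⟩ := abs_le.1 ht
    exact hanti (mem_Ici.2 (by linarith)) (mem_Ici.2 (by linarith)) (by linarith)

lemma exists_pos_forall_le_of_continuousOn {f : ℝ → ℝ} (hf : ContinuousOn f (Ioi 0))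
    (hf₀ : ∀ t, 0 < t → 0 < f t) (hliminf : ∃ ε, 0 < ε ∧ ∀ᶠ t in 𝓝[>] 0, ε ≤ f t) (M : ℝ) :
    ∃ c > 0, ∀ t ∈ Ioc 0 M, c ≤ f t := by
  obtain ⟨ε, hε, hnear⟩ := hliminf
  obtain ⟨δ, hδ : 0 < δ, hnear⟩ := mem_nhdsGT_iff_exists_Ioo_subset.1 hnear
  obtain ⟨c, hc, hfar⟩ := isCompact_Icc.exists_forall_le' (a := 0)
    (hf.mono fun t (ht : t ∈ Icc δ M) ↦ hδ.trans_le ht.1) fun t ht ↦ hf₀ t (hδ.trans_le ht.1)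
  refine ⟨min ε c, lt_min hε hc, fun t ht ↦ ?_⟩
  rcases lt_or_ge t δ with htδ | htδ
  · exact (min_le_left _ _).trans (hnear ⟨ht.1, htδ⟩)
  · exact (min_le_right _ _).trans (hfar t ⟨htδ, ht.2⟩)

end Weight

section InfDist

lemma exists_forall_abs_infDist_sub_norm_le {E : Type*} [SeminormedAddCommGroup E] {S : Set E}
    (hS : IsBounded S) (hne : S.Nonempty) : ∃ C, ∀ x, |infDist x S - ‖x‖| ≤ C := by
  obtain ⟨C, hC⟩ := hS.exists_norm_le
  refine ⟨C, fun x ↦ abs_sub_le_iff.2 ⟨?_, ?_⟩⟩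
  · obtain ⟨y, hy⟩ := hne
    have hxy : dist x y ≤ ‖x‖ + ‖y‖ := dist_le_norm_add_norm x y
    linarith [infDist_le_dist_of_mem (x := x) hy, hC y hy]
  · suffices ‖x‖ - C ≤ infDist x S by linarith
    refine (le_infDist hne).2 fun y hy ↦ ?_
    rw [dist_eq_norm]
    linarith [norm_sub_norm_le x y, hC y hy]

lemma frontier_nonempty_of_isBounded {E : Type*} [NormedAddCommGroup E] [NormedSpace ℝ E]
    [Nontrivial E] {K : Set E} (hK : IsBounded K) (hne : K.Nonempty) : (frontier K).Nonempty :=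
  nonempty_frontier_iff.2 ⟨hne, fun huniv ↦ NormedSpace.unbounded_univ ℝ E (huniv ▸ hK)⟩

end InfDist

theorem statement_3_general {E : Type*} [NormedAddCommGroup E] [InnerProductSpace ℝ E]
    [FiniteDimensional ℝ E] (hE : 3 ≤ Module.finrank ℝ E) {φ f : ℝ → ℝ}
    (hφ : ContinuousOn φ (Ioi 0)) (hφ₀ : ∀ r, 0 < r → 0 ≤ φ r)
    (hf : ∀ M, ∃ c > 0, ∀ t ∈ Ioc 0 M, c ≤ f t)
    (hmono : ∃ r₁, MonotoneOn φ (Ici r₁) ∨ AntitoneOn φ (Ici r₁))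
    (hdiv : ¬ IntegrableOn (fun r ↦ r * φ r) (Ioi 1))
    {S : Set E} (hS : IsBounded S) (hne : S.Nonempty) :
    ¬ ∃ u : E → ℝ, ∀ᶠ x in cobounded E, IsPosSupersolutionAt (fun y ↦ φ (infDist y S)) f u x := by
  rintro ⟨u, hu⟩
  obtain ⟨n, hn⟩ := Nat.exists_eq_add_of_le' hE
  obtain ⟨C, hC⟩ := exists_forall_abs_infDist_sub_norm_le hS hne
  obtain ⟨d, hd⟩ := exists_eventually_forall_comp_add_le hmono C
  obtain ⟨r, -, hr⟩ := hasBasis_cobounded_norm.eventually_iff.1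
    (hu.and (tendsto_norm_cobounded_atTop.eventually hd))
  set r₀ := max r (|d| + 1)
  have hdr₀ : |d| < r₀ := (lt_add_one _).trans_le (le_max_right _ _)
  have hpos : ∀ s, 0 < max s r₀ + d := fun s ↦ by
    linarith [neg_abs_le d, le_max_right s r₀]
  refine not_forall_isPosSupersolutionAt_norm hn (ψ := fun s ↦ φ (max s r₀ + d))
    (hφ.comp_continuous (by fun_prop) hpos) (fun s _ ↦ hφ₀ _ (hpos s))
    ((abs_nonneg d).trans_lt hdr₀) (tendsto_integral_mul_comp_max_add_atTop hφ hφ₀ hdiv hdr₀)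
    hf u fun x hx ↦ ?_
  obtain ⟨hux, hφx⟩ := hr (show r ≤ ‖x‖ from (le_max_left _ _).trans hx)
  obtain ⟨c, hc, hfc⟩ := hf (u x)
  refine hux.mono_weight ?_ (hc.le.trans (hfc _ ⟨hux.pos, le_rfl⟩))
  simpa only [max_eq_left hx] using hφx _ (hC x)

lemma laplacian_eq {N : ℕ} (u : EuclideanSpace ℝ (Fin N) → ℝ) : laplacian u = Δ u := by
  ext x
  rw [InnerProductSpace.laplacian_eq_iteratedFDeriv_orthonormalBasis u
    (EuclideanSpace.basisFun (Fin N) ℝ)]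
  simp only [laplacian, EuclideanSpace.basisFun_apply]

lemma eventually_isPosSupersolutionAt_of_isCompact {N : ℕ} {K : Set (EuclideanSpace ℝ (Fin N))}
    (hK : IsCompact K) {w u : EuclideanSpace ℝ (Fin N) → ℝ} {f : ℝ → ℝ}
    (hu₂ : ContDiffOn ℝ 2 u Kᶜ) (hu : ∀ x ∈ Kᶜ, 0 < u x ∧ w x * f (u x) ≤ -laplacian u x) :
    ∀ᶠ x in cobounded (EuclideanSpace ℝ (Fin N)), IsPosSupersolutionAt w f u x := by
  filter_upwards [isBounded_def.1 hK.isBounded] with x hx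
  obtain ⟨hpos, hle⟩ := hu x hx
  exact ⟨hu₂.contDiffAt (hK.isClosed.isOpen_compl.mem_nhds hx), hpos, by rwa [← laplacian_eq]⟩

/-- Theorem 3.1: nonexistence when the weight is not integrable at infinity. -/
theorem statement_3 {N : ℕ} (hN : 3 ≤ N) (φ f : ℝ → ℝ)
    (hφcont : ContinuousOn φ (Ioi (0:ℝ))) (hφnonneg : ∀ r : ℝ, 0 < r → 0 ≤ φ r)
    (hfcont : ContinuousOn f (Ioi (0:ℝ))) (hfpos : ∀ t : ℝ, 0 < t → 0 < f t)
    (hliminf : ∃ ε : ℝ, 0 < ε ∧ ∀ᶠ t in nhdsWithin (0:ℝ) (Ioi 0), ε ≤ f t)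
    (hmono : ∃ r₁ : ℝ, 0 < r₁ ∧ (MonotoneOn φ (Ici r₁) ∨ AntitoneOn φ (Ici r₁)))
    (hdiv : ¬ IntegrableOn (fun r : ℝ => r * φ r) (Ioi (1:ℝ)) volume)
    (K : Set (EuclideanSpace ℝ (Fin N))) (hK : IsCompact K) (hKne : K.Nonempty) :
    ¬ ∃ u : EuclideanSpace ℝ (Fin N) → ℝ,
        ContDiffOn ℝ 2 u Kᶜ ∧
        ∀ x ∈ Kᶜ, 0 < u x ∧ φ (infDist x (frontier K)) * f (u x) ≤ -laplacian u x := by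
  rintro ⟨u, hu₂, hu⟩
  obtain ⟨r₁, -, hmono⟩ := hmono
  have hfin : 3 ≤ Module.finrank ℝ (EuclideanSpace ℝ (Fin N)) := by simpa using hN
  have : Nontrivial (EuclideanSpace ℝ (Fin N)) :=
    Module.nontrivial_of_finrank_pos (R := ℝ) (by omega)
  exact statement_3_general hfin hφcont hφnonneg
    (exists_pos_forall_le_of_continuousOn hfcont hfpos hliminf) ⟨r₁, hmono⟩ hdiv
    (hK.isBounded.subset hK.isClosed.frontier_subset)
    (frontier_nonempty_of_isBounded hK.isBounded hKne)
    ⟨u, eventually_isPosSupersolutionAt_of_isCompact hK hu₂ hu⟩
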